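/- For every point p ∈ Ω, the differential at p of the map Φ = (k, α, M) is an invertible linear map if and only if the Hessian ∇²Θ(p) is invertible. In particular, Φ is a local diffeomorphism on Ω if and only if det ∇²Θ ≠ 0 everywhere on Ω. -/

import Mathlib

open Matrix

noncomputable section

/-- The state space `ℝ × ℝ × ℝ^N` with coordinates `(μ, c, λ)`
(respectively `(k, α, M)`). -/
abbrev E (N : ℕ) : Type := ℝ × ℝ × (Fin N → ℝ)

/-- Index type for `(N+2) × (N+2)` matrices in `1 + 1 + N` block form. -/
abbrev Idx (N : ℕ) : Type := Fin 1 ⊕ Fin 1 ⊕ Fin N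

/-- The standard basis of `ℝ × ℝ × ℝ^N`. -/
def basisVec (N : ℕ) : Idx N → E N :=
  Sum.elim (fun _ => (1, 0, 0))
    (Sum.elim (fun _ => (0, 1, 0)) (fun i => (0, 0, Pi.single i 1)))

/-- The impulse `Q(M) = (1/2) M · B⁻¹ M`. -/
def Qimp (N : ℕ) (B : Matrix (Fin N) (Fin N) ℝ) (M : Fin N → ℝ) : ℝ :=
  (1/2) * (M ⬝ᵥ B⁻¹.mulVec M)

/-- Partial derivative `∂_μΘ`. -/
def dmu (N : ℕ) (Θ : E N → ℝ) (p : E N) : ℝ := fderiv ℝ Θ p (1, 0, 0)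

/-- Partial derivative `∂_cΘ`. -/
def dc (N : ℕ) (Θ : E N → ℝ) (p : E N) : ℝ := fderiv ℝ Θ p (0, 1, 0)

/-- Gradient `∇_λΘ` in the `λ` variables. -/
def gradlam (N : ℕ) (Θ : E N → ℝ) (p : E N) : Fin N → ℝ :=
  fun i => fderiv ℝ Θ p (0, 0, Pi.single i 1)

/-- Hessian matrix of a function on `ℝ × ℝ × ℝ^N` in the standard basis. -/
def hessMat (N : ℕ) (Θ : E N → ℝ) (p : E N) : Matrix (Idx N) (Idx N) ℝ :=
  Matrix.of fun i j =>
    fderiv ℝ (fun q => fderiv ℝ Θ q (basisVec N j)) p (basisVec N i)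

/-- The wavenumber `k = 1/∂_μΘ`. -/
def kfun (N : ℕ) (Θ : E N → ℝ) (p : E N) : ℝ := 1 / dmu N Θ p

/-- The mean value `M = ∇_λΘ/∂_μΘ`. -/
def Mfun (N : ℕ) (Θ : E N → ℝ) (p : E N) : Fin N → ℝ :=
  (dmu N Θ p)⁻¹ • gradlam N Θ p

/-- The variable `α = ∂_cΘ − ∂_μΘ · Q(∇_λΘ/∂_μΘ)`. -/
def afun (N : ℕ) (B : Matrix (Fin N) (Fin N) ℝ) (Θ : E N → ℝ) (p : E N) : ℝ :=
  dc N Θ p - dmu N Θ p * Qimp N B (Mfun N Θ p)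

/-- The map `Φ = (k, α, M)`. -/
def Phi (N : ℕ) (B : Matrix (Fin N) (Fin N) ℝ) (Θ : E N → ℝ) (p : E N) : E N :=
  (kfun N Θ p, afun N B Θ p, Mfun N Θ p)

/-- `Φ` is a local diffeomorphism at `p`: it is smooth and injective on an open
neighborhood of `p`, its image is open, and it admits a smooth local inverse. -/
def IsLocalDiffeoAt (N : ℕ) (Φ : E N → E N) (p : E N) : Prop :=
  ∃ s : Set (E N), IsOpen s ∧ p ∈ s ∧ ContDiffOn ℝ (⊤ : ℕ∞) Φ s ∧ Set.InjOn Φ s ∧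
    IsOpen (Φ '' s) ∧ ∃ Ψ : E N → E N, (∀ x ∈ s, Ψ (Φ x) = x) ∧
      ContDiffOn ℝ (⊤ : ℕ∞) Ψ (Φ '' s)

end

/-!
`Φ` factors as the full gradient map `p ↦ (∂_μΘ, ∂_cΘ, ∇_λΘ)`, whose differential has matrix `∇²Θ`,
followed by the explicit map `(a, b, w) ↦ (a⁻¹, b - a Q(a⁻¹ w), a⁻¹ w)`. On `a ≠ 0` the latter is a
diffeomorphism for any smooth `Q`, with inverse `(k, α, M) ↦ (k⁻¹, α + k⁻¹ Q(M), k⁻¹ M)`, so the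
chain rule gives the pointwise equivalence and the inverse function theorem the local one.
-/

open Filter Topology
open scoped ContDiff

section Calculus

variable {𝕜 V W : Type*} [NontriviallyNormedField 𝕜] [NormedAddCommGroup V] [NormedSpace 𝕜 V]
  [NormedAddCommGroup W] [NormedSpace 𝕜 W]

lemma isInvertible_iff_bijective [CompleteSpace V] [CompleteSpace W] {L : V →L[𝕜] W} :
    L.IsInvertible ↔ Function.Bijective L :=
  ⟨fun h => h.bijective, fun h => ⟨ContinuousLinearEquiv.ofBijective L
    (LinearMap.ker_eq_bot.2 h.1) (LinearMap.range_eq_top.2 h.2), rfl⟩⟩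

lemma fderiv_comp_fderiv_eq_id_of_eventually_leftInverse {f : V → W} {g : W → V} {x : V}
    (hf : DifferentiableAt 𝕜 f x) (hg : DifferentiableAt 𝕜 g (f x))
    (hgf : ∀ᶠ y in 𝓝 x, g (f y) = y) :
    fderiv 𝕜 g (f x) ∘L fderiv 𝕜 f x = .id 𝕜 V := by
  have hid : g ∘ f =ᶠ[𝓝 x] id := hgf
  rw [← fderiv_comp x hg hf, hid.fderiv_eq, fderiv_id]

lemma isInvertible_fderiv_of_eventually_inverse {f : V → W} {g : W → V} {x : V}
    (hf : DifferentiableAt 𝕜 f x) (hg : DifferentiableAt 𝕜 g (f x))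
    (hgf : ∀ᶠ y in 𝓝 x, g (f y) = y) (hfg : ∀ᶠ z in 𝓝 (f x), f (g z) = z) :
    (fderiv 𝕜 f x).IsInvertible := by
  have hx : g (f x) = x := hgf.self_of_nhds
  have hright := fderiv_comp_fderiv_eq_id_of_eventually_leftInverse hg (by rwa [hx]) hfg
  rw [hx] at hright
  exact .of_inverse hright (fderiv_comp_fderiv_eq_id_of_eventually_leftInverse hf hg hgf)

lemma toMatrix_fderiv_apply [CompleteSpace 𝕜] {ι κ : Type*} [Fintype ι] [DecidableEq ι]
    [Finite κ] (b : Module.Basis ι 𝕜 V) (c : Module.Basis κ 𝕜 W) {f : V → W} {x : V}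
    (hf : DifferentiableAt 𝕜 f x) (i : κ) (j : ι) :
    LinearMap.toMatrix b c (fderiv 𝕜 f x : V →ₗ[𝕜] W) i j =
      fderiv 𝕜 (fun y => c.repr (f y) i) x (b j) := by
  have : FiniteDimensional 𝕜 W := .of_basis c
  have hcoord : HasFDerivAt (fun y => c.repr (f y) i)
      ((c.coord i).toContinuousLinearMap ∘L fderiv 𝕜 f x) x :=
    (c.coord i).toContinuousLinearMap.hasFDerivAt.comp x hf.hasFDerivAt
  rw [hcoord.fderiv, LinearMap.toMatrix_apply]
  rfl

end Calculus

lemma exists_openPartialHomeomorph_contDiffOn_symm {𝕂 V W : Type*} [RCLike 𝕂]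
    [NormedAddCommGroup V] [NormedSpace 𝕂 V] [CompleteSpace V]
    [NormedAddCommGroup W] [NormedSpace 𝕂 W]
    {n : WithTop ℕ∞} (hn : n ≠ 0) {s : Set V} (hs : IsOpen s) {f : V → W}
    (hf : ContDiffOn 𝕂 n f s) {x : V} (hx : x ∈ s) (hfx : (fderiv 𝕂 f x).IsInvertible) :
    ∃ e : OpenPartialHomeomorph V W, ⇑e = f ∧ x ∈ e.source ∧ e.source ⊆ s ∧
      ContDiffOn 𝕂 n e.symm e.target := by
  have hfs {y : V} (hy : y ∈ s) : ContDiffAt 𝕂 n f y := hf.contDiffAt (hs.mem_nhds hy)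
  have hderiv {y : V} (hy : y ∈ s) : HasFDerivAt f (fderiv 𝕂 f y) y :=
    ((hfs hy).differentiableAt hn).hasFDerivAt
  -- For `n = ∞`, regularity of the inverse at `f x` alone gives no neighbourhood on which it is
  -- smooth, so the source is shrunk to points where the derivative is invertible.
  let u := s ∩ fderiv 𝕂 f ⁻¹' Set.range ((↑) : (V ≃L[𝕂] W) → V →L[𝕂] W)
  have hcont : ContinuousOn (fderiv 𝕂 f) s :=
    hf.continuousOn_fderiv_of_isOpen hs (ENat.one_le_iff_ne_zero_withTop.2 hn)
  have hu : IsOpen u := hcont.isOpen_inter_preimage hs ContinuousLinearEquiv.isOpen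
  obtain ⟨L, hL⟩ := hfx
  have hfL : HasFDerivAt f (L : V →L[𝕂] W) x := hL ▸ hderiv hx
  let e := ((hfs hx).toOpenPartialHomeomorph f hfL hn).restrOpen u hu
  have hsource : e.source ⊆ u := Set.inter_subset_right
  refine ⟨e, rfl, ⟨(hfs hx).mem_toOpenPartialHomeomorph_source hfL hn, hx, L, hL⟩,
    hsource.trans Set.inter_subset_left, fun z hz => ContDiffAt.contDiffWithinAt ?_⟩
  obtain ⟨hys, L', hL'⟩ := hsource (e.map_target hz)
  exact e.contDiffAt_symm hz (f₀' := L') (hL' ▸ hderiv hys) (hfs hys)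

section WaveVariables

variable {𝕜 V : Type*} [NontriviallyNormedField 𝕜] [NormedAddCommGroup V] [NormedSpace 𝕜 V]
  {n : WithTop ℕ∞} {q : V → 𝕜}

/-- The wave variables `(k, α, M)` as a function of the gradient
`(a, b, w) = (∂_μΘ, ∂_cΘ, ∇_λΘ)` of the action, for an arbitrary impulse function `q`. -/
def waveOfGrad (q : V → 𝕜) (x : 𝕜 × 𝕜 × V) : 𝕜 × 𝕜 × V :=
  (x.1⁻¹, x.2.1 - x.1 * q (x.1⁻¹ • x.2.2), x.1⁻¹ • x.2.2)

/-- The gradient `(∂_μΘ, ∂_cΘ, ∇_λΘ)` of the action as a function of the wave variables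
`(k, α, M)`: the inverse of `waveOfGrad q` away from `k = 0`. -/
def gradOfWave (q : V → 𝕜) (y : 𝕜 × 𝕜 × V) : 𝕜 × 𝕜 × V :=
  (y.1⁻¹, y.2.1 + y.1⁻¹ * q y.2.2, y.1⁻¹ • y.2.2)

lemma gradOfWave_waveOfGrad (q : V → 𝕜) {x : 𝕜 × 𝕜 × V} (hx : x.1 ≠ 0) :
    gradOfWave q (waveOfGrad q x) = x := by
  simp [gradOfWave, waveOfGrad, smul_smul, hx]

lemma waveOfGrad_gradOfWave (q : V → 𝕜) {y : 𝕜 × 𝕜 × V} (hy : y.1 ≠ 0) :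
    waveOfGrad q (gradOfWave q y) = y := by
  simp [gradOfWave, waveOfGrad, smul_smul, hy]

lemma contDiffAt_waveOfGrad (hq : ContDiff 𝕜 n q) {x : 𝕜 × 𝕜 × V} (hx : x.1 ≠ 0) :
    ContDiffAt 𝕜 n (waveOfGrad q) x := by
  have hk : ContDiffAt 𝕜 n (fun x : 𝕜 × 𝕜 × V => x.1⁻¹) x := contDiffAt_fst.inv hx
  have hM : ContDiffAt 𝕜 n (fun x : 𝕜 × 𝕜 × V => x.1⁻¹ • x.2.2) x := hk.smul (by fun_prop)
  have hqM := hq.contDiffAt.comp x hM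
  exact hk.prodMk ((ContDiffAt.sub (by fun_prop) (contDiffAt_fst.mul hqM)).prodMk hM)

lemma contDiffAt_gradOfWave (hq : ContDiff 𝕜 n q) {y : 𝕜 × 𝕜 × V} (hy : y.1 ≠ 0) :
    ContDiffAt 𝕜 n (gradOfWave q) y := by
  have ha : ContDiffAt 𝕜 n (fun y : 𝕜 × 𝕜 × V => y.1⁻¹) y := contDiffAt_fst.inv hy
  have hqM : ContDiffAt 𝕜 n (fun y : 𝕜 × 𝕜 × V => q y.2.2) y := by fun_prop
  exact ha.prodMk ((ContDiffAt.add (by fun_prop) (ha.mul hqM)).prodMk (ha.smul (by fun_prop)))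

lemma isInvertible_fderiv_waveOfGrad (hq : ContDiff 𝕜 1 q) {x : 𝕜 × 𝕜 × V} (hx : x.1 ≠ 0) :
    (fderiv 𝕜 (waveOfGrad q) x).IsInvertible := by
  have hk : (waveOfGrad q x).1 ≠ 0 := inv_ne_zero hx
  exact isInvertible_fderiv_of_eventually_inverse
    ((contDiffAt_waveOfGrad hq hx).differentiableAt one_ne_zero)
    ((contDiffAt_gradOfWave hq hk).differentiableAt one_ne_zero)
    ((continuousAt_fst.eventually_ne hx).mono fun _ => gradOfWave_waveOfGrad q)
    ((continuousAt_fst.eventually_ne hk).mono fun _ => waveOfGrad_gradOfWave q)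

end WaveVariables

section FullGradient

variable {N : ℕ} {Θ : E N → ℝ} {Ω : Set (E N)}

/-- The full gradient `(∂_μΘ, ∂_cΘ, ∇_λΘ)`, as a self-map of `ℝ × ℝ × ℝ^N`. -/
noncomputable def fullGrad (N : ℕ) (Θ : E N → ℝ) (p : E N) : E N :=
  (dmu N Θ p, dc N Θ p, gradlam N Θ p)

/-- The standard basis `basisVec N` of `ℝ × ℝ × ℝ^N` bundled as a `Module.Basis`, to make
`LinearMap.toMatrix` available. -/
noncomputable def coordBasis (N : ℕ) : Module.Basis (Idx N) ℝ (E N) :=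
  (Module.Basis.singleton (Fin 1) ℝ).prod
    ((Module.Basis.singleton (Fin 1) ℝ).prod (Pi.basisFun ℝ (Fin N)))

lemma coe_coordBasis (N : ℕ) : ⇑(coordBasis N) = basisVec N := by
  ext i : 1
  rcases i with i | i | i <;> simp [coordBasis, basisVec, Prod.zero_eq_mk]

lemma coordBasis_repr_fullGrad (p : E N) (j : Idx N) :
    (coordBasis N).repr (fullGrad N Θ p) j = fderiv ℝ Θ p (basisVec N j) := by
  rcases j with j | j | j <;> simp [coordBasis, fullGrad, basisVec, dmu, dc, gradlam]

lemma contDiffOn_fullGrad {m n : WithTop ℕ∞} (hΩ : IsOpen Ω) (hΘ : ContDiffOn ℝ n Θ Ω)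
    (hmn : m + 1 ≤ n) : ContDiffOn ℝ m (fullGrad N Θ) Ω := by
  have hdir (v : E N) : ContDiffOn ℝ m (fun p => fderiv ℝ Θ p v) Ω :=
    (hΘ.fderiv_of_isOpen hΩ hmn).clm_apply contDiffOn_const
  exact (hdir _).prodMk ((hdir _).prodMk (contDiffOn_pi.2 fun _ => hdir _))

lemma hessMat_eq_transpose_toMatrix_fderiv {p : E N} (h : DifferentiableAt ℝ (fullGrad N Θ) p) :
    hessMat N Θ p = (LinearMap.toMatrix (coordBasis N) (coordBasis N)
      (fderiv ℝ (fullGrad N Θ) p : E N →ₗ[ℝ] E N))ᵀ := by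
  ext i j
  rw [Matrix.transpose_apply, toMatrix_fderiv_apply _ _ h, coe_coordBasis]
  simp only [coordBasis_repr_fullGrad, hessMat, Matrix.of_apply]

lemma bijective_fderiv_fullGrad_iff {p : E N} (h : DifferentiableAt ℝ (fullGrad N Θ) p) :
    Function.Bijective (fderiv ℝ (fullGrad N Θ) p) ↔ (hessMat N Θ p).det ≠ 0 := by
  rw [hessMat_eq_transpose_toMatrix_fderiv h, Matrix.det_transpose, LinearMap.det_toMatrix,
    ← isUnit_iff_ne_zero, ← LinearMap.isUnit_iff_isUnit_det, Module.End.isUnit_iff]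
  rfl

end FullGradient

namespace IsLocalDiffeoAt

variable {N : ℕ} {Φ : E N → E N} {p : E N}

lemma bijective_fderiv (h : IsLocalDiffeoAt N Φ p) : Function.Bijective (fderiv ℝ Φ p) := by
  obtain ⟨s, hs, hp, hΦ, -, hΦs, Ψ, hΨΦ, hΨ⟩ := h
  have hs' : s ∈ 𝓝 p := hs.mem_nhds hp
  have hΦs' : Φ '' s ∈ 𝓝 (Φ p) := hΦs.mem_nhds (Set.mem_image_of_mem Φ hp)
  refine (isInvertible_fderiv_of_eventually_inverse
    ((hΦ.contDiffAt hs').differentiableAt (by simp))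
    ((hΨ.contDiffAt hΦs').differentiableAt (by simp)) (eventually_of_mem hs' hΨΦ) ?_).bijective
  filter_upwards [hΦs']
  rintro _ ⟨x, hx, rfl⟩
  rw [hΨΦ x hx]

lemma of_bijective_fderiv {Ω : Set (E N)} (hΩ : IsOpen Ω) (hΦ : ContDiffOn ℝ ∞ Φ Ω) (hp : p ∈ Ω)
    (h : Function.Bijective (fderiv ℝ Φ p)) : IsLocalDiffeoAt N Φ p := by
  obtain ⟨e, rfl, hpe, heΩ, he⟩ := exists_openPartialHomeomorph_contDiffOn_symm (by simp) hΩ hΦ hp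
    (isInvertible_iff_bijective.2 h)
  rw [← e.image_source_eq_target] at he
  exact ⟨e.source, e.open_source, hpe, hΦ.mono heΩ, e.injOn,
    e.isOpen_image_of_subset_source e.open_source subset_rfl, e.symm, fun _ => e.left_inv, he⟩

end IsLocalDiffeoAt

lemma contDiff_Qimp (N : ℕ) (B : Matrix (Fin N) (Fin N) ℝ) {n : WithTop ℕ∞} :
    ContDiff ℝ n (Qimp N B) := by
  unfold Qimp
  simp only [dotProduct, mulVec]
  fun_prop

lemma Phi_eq_waveOfGrad_comp_fullGrad (N : ℕ) (B : Matrix (Fin N) (Fin N) ℝ) (Θ : E N → ℝ) :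
    Phi N B Θ = waveOfGrad (Qimp N B) ∘ fullGrad N Θ := by
  ext1 p
  simp [Phi, waveOfGrad, fullGrad, kfun, afun, Mfun]

theorem stmt5_general {N : ℕ} {q : (Fin N → ℝ) → ℝ} (hq : ContDiff ℝ ∞ q) {Ω : Set (E N)}
    (hΩ : IsOpen Ω) {Θ : E N → ℝ} (hΘ : ContDiffOn ℝ ∞ Θ Ω) (hμ : ∀ p ∈ Ω, dmu N Θ p ≠ 0)
    {p : E N} (hp : p ∈ Ω) :
    (Function.Bijective (fderiv ℝ (waveOfGrad q ∘ fullGrad N Θ) p) ↔ (hessMat N Θ p).det ≠ 0) ∧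
      (IsLocalDiffeoAt N (waveOfGrad q ∘ fullGrad N Θ) p ↔ (hessMat N Θ p).det ≠ 0) := by
  have hG : ContDiffOn ℝ ∞ (fullGrad N Θ) Ω := contDiffOn_fullGrad hΩ hΘ (by simp)
  have hG' : DifferentiableAt ℝ (fullGrad N Θ) p :=
    (hG.contDiffAt (hΩ.mem_nhds hp)).differentiableAt (by simp)
  have hT {x : E N} (hx : x ∈ Ω) : ContDiffAt ℝ ∞ (waveOfGrad q) (fullGrad N Θ x) :=
    contDiffAt_waveOfGrad hq (hμ x hx)
  have hΦ : ContDiffOn ℝ ∞ (waveOfGrad q ∘ fullGrad N Θ) Ω :=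
    fun x hx => (hT hx).comp_contDiffWithinAt x (hG x hx)
  have hbij : Function.Bijective (fderiv ℝ (waveOfGrad q ∘ fullGrad N Θ) p) ↔
      (hessMat N Θ p).det ≠ 0 := by
    rw [← bijective_fderiv_fullGrad_iff hG', fderiv_comp p ((hT hp).differentiableAt (by simp)) hG',
      ContinuousLinearMap.coe_comp]
    exact Function.Bijective.of_comp_iff'
      (isInvertible_fderiv_waveOfGrad (hq.of_le (by simp)) (hμ p hp)).bijective _
  exact ⟨hbij, fun h => hbij.1 h.bijective_fderiv,
    fun h => .of_bijective_fderiv hΩ hΦ hp (hbij.2 h)⟩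

/-- the differential of `Φ = (k, α, M)` is invertible at `p ∈ Ω` iff
the Hessian `∇²Θ(p)` is invertible; in particular `Φ` is a local diffeomorphism on
`Ω` iff `det ∇²Θ ≠ 0` everywhere on `Ω`. -/
theorem stmt5 (N : ℕ) (hN : 1 ≤ N) (B : Matrix (Fin N) (Fin N) ℝ)
    (hBsymm : B.IsSymm) (hBinv : IsUnit B.det)
    (Ω : Set (E N)) (hΩ : IsOpen Ω)
    (Θ : E N → ℝ) (hΘ : ContDiffOn ℝ (⊤ : ℕ∞) Θ Ω)
    (hμpos : ∀ p ∈ Ω, 0 < dmu N Θ p) :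
    (∀ p ∈ Ω,
      Function.Bijective (fderiv ℝ (Phi N B Θ) p) ↔ (hessMat N Θ p).det ≠ 0) ∧
    ((∀ p ∈ Ω, IsLocalDiffeoAt N (Phi N B Θ) p)
      ↔ (∀ p ∈ Ω, (hessMat N Θ p).det ≠ 0)) := by
  have h {p : E N} (hp : p ∈ Ω) :=
    stmt5_general (contDiff_Qimp N B) hΩ hΘ (fun x hx => (hμpos x hx).ne') hp
  rw [Phi_eq_waveOfGrad_comp_fullGrad]
  exact ⟨fun p hp => (h hp).1, forall₂_congr fun p hp => (h hp).2⟩
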